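/- Let H ∈ (0, 3/4). There exists a constant C_H depending only on H such that for every integer n ≥ 1 and every l ∈ {1,…,n}, Σ_{j=1}^n Σ_{k=1}^n |β_{k,l} · β_{j,l} · β_{j,k}| ≤ C_H · n^{−4H − min(2H, 1)}. -/

import Mathlib

/-- The fBm autocorrelation sequence `ρ_H(k) = (1/2)(|k+1|^{2H} − 2|k|^{2H} + |k−1|^{2H})`. -/
noncomputable def rhoH (H : ℝ) (k : ℤ) : ℝ :=
  (1/2) * (|(k:ℝ) + 1| ^ (2 * H) - 2 * |(k:ℝ)| ^ (2 * H) + |(k:ℝ) - 1| ^ (2 * H))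

theorem rhoH_neg (H : ℝ) (k : ℤ) : rhoH H (-k) = rhoH H k := by
  unfold rhoH
  push_cast
  have h1 : |-(k:ℝ) + 1| = |(k:ℝ) - 1| := by rw [← abs_neg]; ring_nf
  have h2 : |-(k:ℝ) - 1| = |(k:ℝ) + 1| := by rw [← abs_neg]; ring_nf
  rw [h1, h2, abs_neg]; ring

theorem rhoH_zero (H : ℝ) (hH : 0 < H) : rhoH H 0 = 1 := by
  unfold rhoH
  have : 2 * H ≠ 0 := by positivity
  simp [Real.zero_rpow this]
  norm_num

theorem rhoH_succ (H : ℝ) (m : ℕ) : rhoH H ((m + 1 : ℕ) : ℤ) =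
    (1/2) * (((m:ℝ) + 1 + 1) ^ (2 * H) - 2 * ((m:ℝ) + 1) ^ (2 * H) + (m:ℝ) ^ (2 * H)) := by
  unfold rhoH
  push_cast
  have hm : (0:ℝ) ≤ m := Nat.cast_nonneg m
  rw [abs_of_nonneg (by linarith : (0:ℝ) ≤ (m:ℝ) + 1 + 1), abs_of_nonneg (by linarith : (0:ℝ) ≤ (m:ℝ) + 1),
    add_sub_cancel_right, abs_of_nonneg hm]

theorem rhoH_succ' (H : ℝ) (m : ℕ) : rhoH H ((m + 1 : ℕ) : ℤ) =
    (1/2) * ((m:ℝ) + 1) ^ (2 * H) *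
      ((1 + 1 / ((m:ℝ) + 1)) ^ (2 * H) - 2 + (1 + -(1 / ((m:ℝ) + 1))) ^ (2 * H)) := by
  have hm : (0:ℝ) ≤ m := Nat.cast_nonneg m
  have hp : (0:ℝ) < (m:ℝ) + 1 := by positivity
  have e1 : (m:ℝ) + 1 + 1 = ((m:ℝ) + 1) * (1 + 1 / ((m:ℝ) + 1)) := by field_simp
  have e2 : (m:ℝ) = ((m:ℝ) + 1) * (1 + -(1 / ((m:ℝ) + 1))) := by field_simp; ring
  have hx : 0 ≤ 1 + -(1 / ((m:ℝ) + 1)) := by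
    have : 1 / ((m:ℝ) + 1) ≤ 1 := by rw [div_le_one hp]; linarith
    linarith
  have f1 : ((m:ℝ) + 1 + 1) ^ (2 * H) = ((m:ℝ) + 1) ^ (2 * H) * (1 + 1 / ((m:ℝ) + 1)) ^ (2 * H) := by
    rw [← Real.mul_rpow hp.le (by positivity), ← e1]
  have f2 : (m:ℝ) ^ (2 * H) = ((m:ℝ) + 1) ^ (2 * H) * (1 + -(1 / ((m:ℝ) + 1))) ^ (2 * H) := by
    rw [← Real.mul_rpow hp.le hx, ← e2]
  rw [rhoH_succ, f1, f2]; ring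

theorem inv_bd (m : ℕ) : 0 < 1 / ((m:ℝ) + 1) ∧ 1 / ((m:ℝ) + 1) ≤ 1 := by
  have hm : (0:ℝ) ≤ m := Nat.cast_nonneg m
  refine ⟨by positivity, ?_⟩
  rw [div_le_one (by positivity)]; linarith

theorem rhoH_succ_nonneg (H : ℝ) (h : 1 ≤ 2 * H) (m : ℕ) : 0 ≤ rhoH H ((m + 1 : ℕ) : ℤ) := by
  rw [rhoH_succ']
  obtain ⟨h0, h1⟩ := inv_bd m
  have a1 := one_add_mul_self_le_rpow_one_add (s := 1 / ((m:ℝ) + 1)) (by linarith) h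
  have a2 := one_add_mul_self_le_rpow_one_add (s := -(1 / ((m:ℝ) + 1))) (by linarith) h
  apply mul_nonneg (by positivity)
  linarith

theorem rhoH_succ_nonpos (H : ℝ) (h0 : 0 ≤ 2 * H) (h : 2 * H ≤ 1) (m : ℕ) :
    rhoH H ((m + 1 : ℕ) : ℤ) ≤ 0 := by
  rw [rhoH_succ']
  obtain ⟨h0', h1⟩ := inv_bd m
  have a1 := rpow_one_add_le_one_add_mul_self (s := 1 / ((m:ℝ) + 1)) (by linarith) h0 h
  have a2 := rpow_one_add_le_one_add_mul_self (s := -(1 / ((m:ℝ) + 1))) (by linarith) h0 h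
  apply mul_nonpos_of_nonneg_of_nonpos (by positivity)
  linarith

theorem rpow_aux (a s : ℝ) (h1 : 1 ≤ a) (h2 : a ≤ 2) (hs : -1 ≤ s) :
    (1 + s) ^ a ≤ 1 + a * s + (a - 1) * s ^ 2 := by
  rcases eq_or_lt_of_le hs with rfl | hs
  · have : (1 + -1 : ℝ) = 0 := by norm_num
    rw [this, Real.zero_rpow (by linarith)]
    linarith
  have hp : 0 < 1 + s := by linarith
  have b := rpow_one_add_le_one_add_mul_self (s := s) hs.le (p := a - 1) (by linarith) (by linarith)
  have e : (1 + s) ^ a = (1 + s) * (1 + s) ^ (a - 1) := by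
    rw [← Real.rpow_one_add' hp.le (by linarith)]; congr 1; ring
  rw [e]
  have := mul_le_mul_of_nonneg_left b hp.le
  nlinarith

theorem rhoH_succ_le (H : ℝ) (h : 1 ≤ 2 * H) (h2 : 2 * H ≤ 2) (m : ℕ) :
    rhoH H ((m + 1 : ℕ) : ℤ) ≤ ((m:ℝ) + 1) ^ (2 * H - 2) := by
  rw [rhoH_succ']
  obtain ⟨h0', h1⟩ := inv_bd m
  have a1 := rpow_aux (2 * H) (1 / ((m:ℝ) + 1)) h h2 (by linarith)
  have a2 := rpow_aux (2 * H) (-(1 / ((m:ℝ) + 1))) h h2 (by linarith)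
  have hp : (0:ℝ) < (m:ℝ) + 1 := by positivity
  have e : ((m:ℝ) + 1) ^ (2 * H - 2) = ((m:ℝ) + 1) ^ (2 * H) * (1 / ((m:ℝ) + 1)) ^ 2 := by
    rw [Real.rpow_sub hp, Real.rpow_two]; field_simp
  rw [e, mul_comm (1/2 : ℝ), mul_assoc]
  apply mul_le_mul_of_nonneg_left _ (by positivity)
  have : 0 ≤ (1 / ((m:ℝ) + 1)) ^ 2 := by positivity
  nlinarith

theorem rhoH_tele (H : ℝ) (hH : 0 < H) (N : ℕ) :
    ∑ m ∈ Finset.range N, rhoH H ((m + 1 : ℕ) : ℤ)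
      = (1/2) * (((N:ℝ) + 1) ^ (2 * H) - (N:ℝ) ^ (2 * H) - 1) := by
  induction N with
  | zero => simp [Real.zero_rpow (by positivity : 2 * H ≠ 0)]
  | succ N ih =>
    rw [Finset.sum_range_succ, ih, rhoH_succ]
    push_cast
    ring

theorem rhoH_sum_abs (H : ℝ) (hH : 0 < H) (h2 : 2 * H ≤ 2) (n : ℕ) (hn : 1 ≤ n) :
    ∑ m ∈ Finset.range n, |rhoH H (m : ℤ)| ≤ 2 * (n:ℝ) ^ (2 * H - min (2 * H) 1) := by
  obtain ⟨N, rfl⟩ : ∃ N, n = N + 1 := ⟨n - 1, by omega⟩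
  rw [Finset.sum_range_succ']
  have hz : |rhoH H ((0:ℕ):ℤ)| = 1 := by
    rw [Nat.cast_zero, rhoH_zero H hH, abs_one]
  rw [hz]
  have hN : (0:ℝ) ≤ N := Nat.cast_nonneg N
  rcases le_total 1 (2 * H) with h | h
  · rw [min_eq_right h, Finset.sum_congr rfl (fun m _ => abs_of_nonneg (rhoH_succ_nonneg H h m)),
      rhoH_tele H hH]
    push_cast
    obtain ⟨h0', h1⟩ := inv_bd N
    have hp : (0:ℝ) < (N:ℝ) + 1 := by positivity
    have a2 := one_add_mul_self_le_rpow_one_add (s := -(1 / ((N:ℝ) + 1))) (by linarith) h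
    have e2 : (N:ℝ) = ((N:ℝ) + 1) * (1 + -(1 / ((N:ℝ) + 1))) := by field_simp; ring
    have f2 : (N:ℝ) ^ (2 * H) = ((N:ℝ) + 1) ^ (2 * H) * (1 + -(1 / ((N:ℝ) + 1))) ^ (2 * H) := by
      rw [← Real.mul_rpow hp.le (by linarith), ← e2]
    have e3 : ((N:ℝ) + 1) ^ (2 * H - 1) = ((N:ℝ) + 1) ^ (2 * H) * (1 / ((N:ℝ) + 1)) := by
      rw [Real.rpow_sub hp, Real.rpow_one]; field_simp
    have g : 1 ≤ ((N:ℝ) + 1) ^ (2 * H - 1) := Real.one_le_rpow (by linarith) (by linarith)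
    have p := mul_le_mul_of_nonneg_left a2 (by positivity : 0 ≤ ((N:ℝ) + 1) ^ (2 * H))
    rw [← f2] at p
    have p' : ((N:ℝ) + 1) ^ (2 * H) - 2 * H * ((N:ℝ) + 1) ^ (2 * H - 1) ≤ (N:ℝ) ^ (2 * H) := by
      rw [e3]; linarith
    nlinarith
  · rw [min_eq_left h, Finset.sum_congr rfl (fun m _ => abs_of_nonpos (rhoH_succ_nonpos H (by linarith) h m)),
      Finset.sum_neg_distrib, rhoH_tele H hH, sub_self, Real.rpow_zero]
    have : (N:ℝ) ^ (2 * H) ≤ ((N:ℝ) + 1) ^ (2 * H) :=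
      Real.rpow_le_rpow hN (by linarith) (by linarith)
    linarith

theorem rhoH_sum_sq (H : ℝ) (hH : 0 < H) (h34 : H < 3/4) :
    ∃ B : ℝ, 0 < B ∧ ∀ n : ℕ, ∑ m ∈ Finset.range n, (rhoH H (m : ℤ)) ^ 2 ≤ B := by
  rcases le_total 1 (2 * H) with h | h
  · have hs : Summable (fun m : ℕ => ((m:ℝ)) ^ (4 * H - 4)) :=
      Real.summable_nat_rpow.2 (by linarith)
    have hs' := (summable_nat_add_iff 1).2 hs
    have hb : ∀ m : ℕ, (rhoH H ((m + 1 : ℕ) : ℤ)) ^ 2 ≤ (((m + 1 : ℕ):ℝ)) ^ (4 * H - 4) := by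
      intro m
      have a := rhoH_succ_nonneg H h m
      have b := rhoH_succ_le H h (by linarith) m
      have e : (((m + 1 : ℕ):ℝ)) ^ (4 * H - 4) = (((m:ℝ) + 1) ^ (2 * H - 2)) ^ 2 := by
        rw [← Real.rpow_natCast, ← Real.rpow_mul (by positivity)]
        push_cast; congr 1; ring
      rw [e]
      exact pow_le_pow_left₀ a b 2
    have hsq : Summable (fun m : ℕ => (rhoH H ((m + 1 : ℕ) : ℤ)) ^ 2) :=
      Summable.of_nonneg_of_le (fun m => sq_nonneg _) hb hs'
    have hsq' : Summable (fun m : ℕ => (rhoH H (m : ℤ)) ^ 2) := (summable_nat_add_iff 1).1 hsq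
    refine ⟨∑' m : ℕ, (rhoH H (m : ℤ)) ^ 2 + 1, ?_, fun n => ?_⟩
    · have : 0 ≤ ∑' m : ℕ, (rhoH H (m : ℤ)) ^ 2 := tsum_nonneg (fun m => sq_nonneg _)
      linarith
    · have := hsq'.sum_le_tsum (Finset.range n) (fun m _ => sq_nonneg _)
      linarith
  · have key : ∀ n : ℕ, ∑ m ∈ Finset.range n, |rhoH H (m : ℤ)| ≤ 2 := by
      intro n
      rcases Nat.eq_zero_or_pos n with rfl | hn
      · simp
      · have := rhoH_sum_abs H hH (by linarith) n hn
        rwa [min_eq_left h, sub_self, Real.rpow_zero, mul_one] at this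
    refine ⟨4, by norm_num, fun n => ?_⟩
    have hb : ∀ m : ℕ, |rhoH H (m:ℤ)| ≤ 2 := fun m =>
      (Finset.single_le_sum (f := fun m : ℕ => |rhoH H (m:ℤ)|) (fun i _ => abs_nonneg _)
        (Finset.self_mem_range_succ m)).trans (key (m + 1))
    calc ∑ m ∈ Finset.range n, (rhoH H (m : ℤ)) ^ 2
        ≤ ∑ m ∈ Finset.range n, 2 * |rhoH H (m : ℤ)| := by
          apply Finset.sum_le_sum
          intro m _
          rw [← sq_abs, sq]
          exact mul_le_mul_of_nonneg_right (hb m) (abs_nonneg _)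
      _ ≤ 4 := by rw [← Finset.mul_sum]; linarith [key n]

theorem sum_shift (f : ℤ → ℝ) (h0 : ∀ k, 0 ≤ f k) (he : ∀ k, f (-k) = f k) (n l : ℕ)
    (hl : 1 ≤ l) (hln : l ≤ n) :
    ∑ k ∈ Finset.Icc 1 n, f ((k:ℤ) - (l:ℤ)) ≤ 2 * ∑ m ∈ Finset.range n, f (m:ℤ) := by
  rw [← Finset.sum_filter_add_sum_filter_not (Finset.Icc 1 n) (fun k => k ≤ l)]
  have A : ∑ k ∈ Finset.Icc 1 n with k ≤ l, f ((k:ℤ) - (l:ℤ)) ≤ ∑ m ∈ Finset.range n, f (m:ℤ) := by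
    have e : ∀ k ∈ Finset.filter (fun k => k ≤ l) (Finset.Icc 1 n),
        f ((k:ℤ) - (l:ℤ)) = (fun m : ℕ => f (m:ℤ)) (l - k) := by
      intro k hk
      simp only [Finset.mem_filter, Finset.mem_Icc] at hk
      rw [← he]
      show _ = f _
      congr 1
      omega
    rw [Finset.sum_congr rfl e, ← Finset.sum_image (f := fun m : ℕ => f (m:ℤ)) (g := fun k => l - k)]
    · apply Finset.sum_le_sum_of_subset_of_nonneg
      · intro x hx
        simp only [Finset.mem_image, Finset.mem_filter, Finset.mem_Icc, Finset.mem_range] at hx ⊢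
        omega
      · intros; exact h0 _
    · intro x hx y hy hxy
      simp only [Finset.coe_filter, Finset.mem_Icc, Set.mem_ofPred_eq] at hx hy hxy
      omega
  have B : ∑ k ∈ Finset.Icc 1 n with ¬ k ≤ l, f ((k:ℤ) - (l:ℤ)) ≤ ∑ m ∈ Finset.range n, f (m:ℤ) := by
    have e : ∀ k ∈ Finset.filter (fun k => ¬ k ≤ l) (Finset.Icc 1 n),
        f ((k:ℤ) - (l:ℤ)) = (fun m : ℕ => f (m:ℤ)) (k - l) := by
      intro k hk
      simp only [Finset.mem_filter, Finset.mem_Icc] at hk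
      show _ = f _
      congr 1
      omega
    rw [Finset.sum_congr rfl e, ← Finset.sum_image (f := fun m : ℕ => f (m:ℤ)) (g := fun k => k - l)]
    · apply Finset.sum_le_sum_of_subset_of_nonneg
      · intro x hx
        simp only [Finset.mem_image, Finset.mem_filter, Finset.mem_Icc, Finset.mem_range] at hx ⊢
        omega
      · intros; exact h0 _
    · intro x hx y hy hxy
      simp only [Finset.coe_filter, Finset.mem_Icc, Set.mem_ofPred_eq] at hx hy hxy
      omega
  linarith

/-- Lemma 8 (f): for `H ∈ (0,3/4)` there is a constant `C_H` such that for all `n ≥ 1` and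
`l ∈ {1,…,n}`, `Σ_{j,k=1}^n |β_{k,l}·β_{j,l}·β_{j,k}| ≤ C_H · n^{−4H−min(2H,1)}`,
where `β_{j,k} = n^{−2H} ρ_H(j−k)`. -/
theorem stmt12 (H : ℝ) (hH : H ∈ Set.Ioo (0:ℝ) (3/4)) :
    ∃ C : ℝ, 0 < C ∧ ∀ n : ℕ, 1 ≤ n → ∀ l : ℕ, 1 ≤ l → l ≤ n →
      (∑ j ∈ Finset.Icc 1 n, ∑ k ∈ Finset.Icc 1 n,
          |((n:ℝ) ^ (-(2 * H)) * rhoH H ((k:ℤ) - (l:ℤ)))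
            * ((n:ℝ) ^ (-(2 * H)) * rhoH H ((j:ℤ) - (l:ℤ)))
            * ((n:ℝ) ^ (-(2 * H)) * rhoH H ((j:ℤ) - (k:ℤ)))|)
        ≤ C * (n:ℝ) ^ (-(4 * H) - min (2 * H) 1) := by
  obtain ⟨hH0, hH1⟩ := hH
  obtain ⟨B, hB0, hB⟩ := rhoH_sum_sq H hH0 hH1
  refine ⟨8 * B, by positivity, fun n hn l hl hln => ?_⟩
  have hnp : (0:ℝ) < n := by exact_mod_cast hn
  set E : ℝ := (n:ℝ) ^ (2 * H - min (2 * H) 1) with hE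
  have hE0 : 0 ≤ E := by positivity
  set c : ℝ := (n:ℝ) ^ (-(2 * H)) with hc
  have hc0 : 0 ≤ c := by positivity
  have S1 : ∀ k ∈ Finset.Icc 1 n, ∑ j ∈ Finset.Icc 1 n, |rhoH H ((j:ℤ) - (k:ℤ))| ≤ 4 * E := by
    intro k hk
    rw [Finset.mem_Icc] at hk
    have a := sum_shift (fun k => |rhoH H k|) (fun k => abs_nonneg _)
      (fun k => by simp only [rhoH_neg]) n k hk.1 hk.2
    have b := rhoH_sum_abs H hH0 (by linarith) n hn
    linarith
  have S2 : ∑ k ∈ Finset.Icc 1 n, (rhoH H ((k:ℤ) - (l:ℤ))) ^ 2 ≤ 2 * B := by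
    have a := sum_shift (fun k => (rhoH H k) ^ 2) (fun k => sq_nonneg _)
      (fun k => by simp only [rhoH_neg]) n l hl hln
    have b := hB n
    linarith
  have S3 : ∑ j ∈ Finset.Icc 1 n, ∑ k ∈ Finset.Icc 1 n,
      (rhoH H ((j:ℤ) - (l:ℤ))) ^ 2 * |rhoH H ((j:ℤ) - (k:ℤ))| ≤ 8 * B * E := by
    calc _ ≤ ∑ j ∈ Finset.Icc 1 n, (rhoH H ((j:ℤ) - (l:ℤ))) ^ 2 * (4 * E) := by
          apply Finset.sum_le_sum
          intro j hj
          rw [← Finset.mul_sum]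
          apply mul_le_mul_of_nonneg_left _ (sq_nonneg _)
          refine le_trans (le_of_eq ?_) (S1 j hj)
          apply Finset.sum_congr rfl
          intro k _
          rw [← rhoH_neg, neg_sub]
      _ ≤ 8 * B * E := by
          rw [← Finset.sum_mul]
          have := mul_le_mul_of_nonneg_right S2 (by positivity : 0 ≤ 4 * E)
          linarith
  have S4 : ∑ j ∈ Finset.Icc 1 n, ∑ k ∈ Finset.Icc 1 n,
      (rhoH H ((k:ℤ) - (l:ℤ))) ^ 2 * |rhoH H ((j:ℤ) - (k:ℤ))| ≤ 8 * B * E := by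
    rw [Finset.sum_comm]
    refine le_trans (le_of_eq ?_) S3
    apply Finset.sum_congr rfl
    intro j _
    apply Finset.sum_congr rfl
    intro k _
    rw [← rhoH_neg H ((k:ℤ) - (j:ℤ)), neg_sub]
  have hfin : (n:ℝ) ^ (-(4 * H) - min (2 * H) 1) = c ^ 3 * E := by
    rw [hc, hE, ← Real.rpow_natCast, ← Real.rpow_mul hnp.le, ← Real.rpow_add hnp]
    congr 1; push_cast; ring
  rw [hfin]
  calc _ ≤ ∑ j ∈ Finset.Icc 1 n, ∑ k ∈ Finset.Icc 1 n,
        (c ^ 3 / 2) * ((rhoH H ((k:ℤ) - (l:ℤ))) ^ 2 * |rhoH H ((j:ℤ) - (k:ℤ))|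
          + (rhoH H ((j:ℤ) - (l:ℤ))) ^ 2 * |rhoH H ((j:ℤ) - (k:ℤ))|) := by
        apply Finset.sum_le_sum
        intro j _
        apply Finset.sum_le_sum
        intro k _
        generalize rhoH H ((k:ℤ) - (l:ℤ)) = x
        generalize rhoH H ((j:ℤ) - (l:ℤ)) = y
        generalize rhoH H ((j:ℤ) - (k:ℤ)) = z
        rw [abs_mul, abs_mul, abs_mul, abs_mul, abs_mul, abs_of_nonneg hc0, ← sq_abs x, ← sq_abs y]
        have h1 : 0 ≤ c ^ 3 / 2 * |z| := by positivity
        nlinarith [mul_nonneg h1 (sq_nonneg (|x| - |y|))]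
    _ ≤ 8 * B * (c ^ 3 * E) := by
        simp only [← Finset.mul_sum, Finset.sum_add_distrib]
        simp only [← Finset.mul_sum] at S3 S4
        have h1 : 0 ≤ c ^ 3 / 2 := by positivity
        have := mul_le_mul_of_nonneg_left (add_le_add S4 S3) h1
        linarith
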